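/- Let F = F(a, b) be the free group of rank 2. For every m ≥ 0 there exists a finitely generated subgroup H ≤ F whose dependence length is exactly m, i.e., the minimal k ≥ 0 with DepCl(H) = Dep^k(H) equals m. -/

import Mathlib

open scoped Monoid.Coprod

variable {F : Type*}

/-- The canonical homomorphism `φ_g : H ∗ ⟨x⟩ → F` from the free product of `H` with an
infinite cyclic group (the free group on one generator `x`), restricting to the inclusion
`H ↪ F` and sending `x` to `g`. -/
noncomputable def phi [Group F] (H : Subgroup F) (g : F) :
    (↥H ∗ FreeGroup Unit) →* F :=
  Monoid.Coprod.lift H.subtype (FreeGroup.lift fun _ => g)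

/-- `g` depends on `H` (is algebraic over `H`) if `φ_g` is not injective. -/
def Depends [Group F] (H : Subgroup F) (g : F) : Prop :=
  ¬ Function.Injective (phi H g)

/-- `dep H`: the set of elements of `F` that depend on `H`. -/
def depSet [Group F] (H : Subgroup F) : Set F := {g | Depends H g}

/-- `Dep H`: the subgroup generated by the elements that depend on `H`. -/
noncomputable def DepSubgroup [Group F] (H : Subgroup F) : Subgroup F :=
  Subgroup.closure (depSet H)

/-- The rank of a subgroup: the minimal cardinality of a generating set. For subgroups of
free groups this equals the cardinality of a free basis. -/
noncomputable def rk [Group F] (H : Subgroup F) : Cardinal :=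
  ⨅ S : {S : Set F // Subgroup.closure S = H}, Cardinal.mk S.1

universe u

section FreeGroupHopf

/-- Every nontrivial element of a free group of finite rank acts nontrivially in some action of the
free group on a finite set, namely on a ball around `1`, the generators acting by left
multiplication wherever this is possible. -/
theorem FreeGroup.exists_perm_ne_one {α : Type u} [Finite α] {w : FreeGroup α} (hw : w ≠ 1) :
    ∃ (B : Type u) (_ : Finite B) (f : FreeGroup α →* Equiv.Perm B), f w ≠ 1 := by
  classical
  set n := w.norm with hn
  let S : Set (FreeGroup α) := {g | g.norm ≤ n}
  have hS : S.Finite := by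
    refine ((List.finite_length_le (α × Bool) n).image FreeGroup.mk).subset ?_
    intro g hg
    exact ⟨g.toWord, hg, FreeGroup.mk_toWord⟩
  have : Finite S := hS
  have : Fintype S := Fintype.ofFinite S
  let e : ∀ x : α, {g : S // FreeGroup.of x * (g : FreeGroup α) ∈ S} ≃
      {g : S // (FreeGroup.of x)⁻¹ * (g : FreeGroup α) ∈ S} := fun x =>
    { toFun := fun g => ⟨⟨FreeGroup.of x * g.1.1, g.2⟩, by simp⟩
      invFun := fun g => ⟨⟨(FreeGroup.of x)⁻¹ * g.1.1, g.2⟩, by simp⟩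
      left_inv := fun g => by simp
      right_inv := fun g => by simp }
  let f : FreeGroup α →* Equiv.Perm S := FreeGroup.lift fun x => (e x).extendSubtype
  have hpos : ∀ (x : α) (g : S) (h : FreeGroup.of x * (g : FreeGroup α) ∈ S),
      f (FreeGroup.of x) g = ⟨FreeGroup.of x * g, h⟩ := by
    intro x g h
    simp only [f, FreeGroup.lift_apply_of]
    exact (e x).extendSubtype_apply_of_mem g h
  have one_mem : (1 : FreeGroup α) ∈ S := by simp [S]
  have key : ∀ L : List (α × Bool), L.length ≤ n →
      ((f (FreeGroup.mk L) ⟨1, one_mem⟩ : S) : FreeGroup α) = FreeGroup.mk L := by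
    intro L
    induction L with
    | nil => intro _; rw [← FreeGroup.one_eq_mk]; simp
    | cons l L ih =>
      intro hL
      have hL' : L.length ≤ n := by simp at hL; omega
      have hmem : FreeGroup.mk (l :: L) ∈ S := FreeGroup.norm_mk_le.trans hL
      have hmem' : FreeGroup.mk L ∈ S := FreeGroup.norm_mk_le.trans hL'
      have ih' : f (FreeGroup.mk L) ⟨1, one_mem⟩ = ⟨FreeGroup.mk L, hmem'⟩ := Subtype.ext (ih hL')
      have hsplit : FreeGroup.mk (l :: L) = FreeGroup.mk [l] * FreeGroup.mk L := by
        rw [FreeGroup.mul_mk]; rfl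
      obtain ⟨x, b⟩ := l
      cases b with
      | true =>
        have hx : FreeGroup.mk [(x, true)] = FreeGroup.of x := rfl
        rw [hsplit, hx] at hmem ⊢
        rw [_root_.map_mul, Equiv.Perm.mul_apply, ih', hpos x _ hmem]
      | false =>
        have hx : FreeGroup.mk [(x, false)] = (FreeGroup.of x)⁻¹ := rfl
        rw [hsplit, hx] at hmem ⊢
        rw [_root_.map_mul, Equiv.Perm.mul_apply, ih', _root_.map_inv]
        have h2 : f (FreeGroup.of x) ⟨_, hmem⟩ = ⟨FreeGroup.mk L, hmem'⟩ := by
          rw [hpos x _ (by simpa using hmem')]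
          simp
        exact congrArg Subtype.val (Equiv.Perm.inv_eq_iff_eq.2 h2.symm)
  refine ⟨S, inferInstance, f, fun h => hw ?_⟩
  have := key w.toWord le_rfl
  rw [FreeGroup.mk_toWord, h] at this
  exact this.symm

/-- Free groups of finite rank are Hopfian. -/
theorem FreeGroup.injective_of_surjective {α : Type*} [Finite α]
    {f : FreeGroup α →* FreeGroup α} (hf : Function.Surjective f) : Function.Injective f := by
  rw [injective_iff_map_eq_one]
  intro w hw
  by_contra hne
  obtain ⟨B, _, ρ, hρ⟩ := FreeGroup.exists_perm_ne_one hne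
  have : Finite (FreeGroup α →* Equiv.Perm B) := Finite.of_equiv _ FreeGroup.lift
  have hinj : Function.Injective fun h : FreeGroup α →* Equiv.Perm B => h.comp f :=
    fun h₁ h₂ h => (MonoidHom.cancel_right hf).1 h
  obtain ⟨h, rfl⟩ := Finite.surjective_of_injective hinj ρ
  exact hρ (by simp [hw])

/-- If a homomorphism from a free group of rank `n + 1` to a free group is not injective, then its
range is generated by `n` elements. -/
theorem FreeGroup.exists_range_eq_of_not_injective {G : Type*} [Group G] [IsFreeGroup G] {n : ℕ}
    {f : FreeGroup (Fin (n + 1)) →* G} (hf : ¬ Function.Injective f) :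
    ∃ g : FreeGroup (Fin n) →* G, g.range = f.range := by
  classical
  let X := IsFreeGroup.Generators f.range
  let e : f.range ≃* FreeGroup X := IsFreeGroup.toFreeGroup f.range
  let s : FreeGroup (Fin (n + 1)) →* FreeGroup X := e.toMonoidHom.comp f.rangeRestrict
  have hs : Function.Surjective s := e.surjective.comp f.rangeRestrict_surjective
  let C := Multiplicative (ZMod 2)
  have hinj : Function.Injective fun h : X → C =>
      FreeGroup.lift.symm ((FreeGroup.lift h).comp s) := fun h₁ h₂ h =>
    FreeGroup.lift.injective ((MonoidHom.cancel_right hs).1 (FreeGroup.lift.symm.injective h))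
  have : Finite (X → C) := Finite.of_injective _ hinj
  have : Finite X := Finite.of_injective
    (fun x : X => (Pi.mulSingle x (Multiplicative.ofAdd 1) : X → C)) (fun x y h => by
      by_contra hxy
      have := congrFun h x
      simp [hxy, C] at this)
  have : Fintype X := Fintype.ofFinite X
  have hcard : Fintype.card X ≤ n + 1 := by
    have h := Fintype.card_le_of_injective _ hinj
    simp only [Fintype.card_fun, Fintype.card_fin, C, Fintype.card_multiplicative, ZMod.card] at h
    exact (Nat.pow_le_pow_iff_right (by norm_num)).1 h
  rcases hcard.lt_or_eq with hlt | heq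
  · obtain ⟨i⟩ : Nonempty (X ↪ Fin n) :=
      Function.Embedding.nonempty_of_card_le (by simpa using Nat.lt_succ_iff.1 hlt)
    let t : FreeGroup (Fin n) →* FreeGroup X := FreeGroup.lift (Function.extend i FreeGroup.of 1)
    have ht : Function.Surjective t := by
      have : t.comp (FreeGroup.map i) = MonoidHom.id _ := by
        ext x; simp [t, i.injective.extend_apply]
      exact fun y => ⟨FreeGroup.map i y, DFunLike.congr_fun this y⟩
    have het : (e.symm.toMonoidHom.comp t).range = ⊤ :=
      MonoidHom.range_eq_top.2 (e.symm.surjective.comp ht)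
    refine ⟨f.range.subtype.comp (e.symm.toMonoidHom.comp t), ?_⟩
    rw [MonoidHom.range_comp, het, ← MonoidHom.range_eq_map, Subgroup.range_subtype]
  · refine absurd ?_ hf
    let r : FreeGroup X ≃* FreeGroup (Fin (n + 1)) :=
      FreeGroup.freeGroupCongr (Fintype.equivFinOfCardEq heq)
    have h1 : Function.Injective (r.toMonoidHom.comp s) :=
      FreeGroup.injective_of_surjective (r.surjective.comp hs)
    intro x y hxy
    apply h1
    have : f.rangeRestrict x = f.rangeRestrict y := Subtype.ext hxy
    simp [s, this]

end FreeGroupHopf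

section Dependence

variable {G : Type*} [Group G]

theorem phi_inl (H : Subgroup G) (g : G) (h : H) : phi H g (Monoid.Coprod.inl h) = h := by
  simp [phi]

theorem phi_inr_of (H : Subgroup G) (g : G) (x : Unit) :
    phi H g (Monoid.Coprod.inr (FreeGroup.of x)) = g := by
  simp [phi]

theorem Subgroup.le_DepSubgroup (H : Subgroup G) : H ≤ DepSubgroup H := by
  intro h hh
  refine Subgroup.subset_closure fun hinj => ?_
  have := @hinj (Monoid.Coprod.inl ⟨h, hh⟩) (Monoid.Coprod.inr (FreeGroup.of ()))
    (by rw [phi_inl, phi_inr_of])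
  have := congrArg (Monoid.Coprod.snd (M := H) (N := FreeGroup Unit)) this
  simp at this

/-- Dependence is transported by injective homomorphisms. -/
theorem depends_map_iff {G' : Type*} [Group G'] {f : G →* G'} (hf : Function.Injective f)
    (H : Subgroup G) (g : G) : Depends (H.map f) (f g) ↔ Depends H g := by
  let E : H ≃* H.map f := H.equivMapOfInjective f hf
  let E' := MulEquiv.coprodCongr E (MulEquiv.refl (FreeGroup Unit))
  have h : (phi (H.map f) (f g)).comp E'.toMonoidHom = f.comp (phi H g) := by
    apply Monoid.Coprod.hom_ext
    · ext h; simp [E', E, phi]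
    · ext; simp [E', phi]
  have h' : Function.Injective ((phi (H.map f) (f g)).comp E'.toMonoidHom) ↔
      Function.Injective (phi H g) := by
    rw [h]; exact ⟨fun h => Function.Injective.of_comp h, fun h => hf.comp h⟩
  rw [Depends, Depends, ← h', MonoidHom.coe_comp]
  exact not_congr (Function.Injective.of_comp_iff' _ E'.bijective).symm

theorem DepSubgroup_map {G' : Type*} [Group G'] {f : G →* G'} (hf : Function.Injective f)
    (H : Subgroup G) (h : depSet (H.map f) ⊆ f.range) :
    DepSubgroup (H.map f) = (DepSubgroup H).map f := by
  have : depSet (H.map f) = f '' depSet H := by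
    ext y
    constructor
    · intro hy
      obtain ⟨g, rfl⟩ := h hy
      exact ⟨g, (depends_map_iff hf H g).1 hy, rfl⟩
    · rintro ⟨g, hg, rfl⟩
      exact (depends_map_iff hf H g).2 hg
  rw [DepSubgroup, DepSubgroup, this, MonoidHom.map_closure]

/-- The homomorphism from the free group of rank `3` that agrees with `θ` on the first two
generators and sends the third one to `g`. -/
def FreeGroup.adjoin (θ : FreeGroup (Fin 2) →* G) (g : G) : FreeGroup (Fin 3) →* G :=
  FreeGroup.lift ![θ (.of 0), θ (.of 1), g]

theorem FreeGroup.range_adjoin_le {θ : FreeGroup (Fin 2) →* G} {g : G} {S : Subgroup G}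
    (hθ : θ.range ≤ S) (hg : g ∈ S) : (FreeGroup.adjoin θ g).range ≤ S := by
  refine FreeGroup.range_lift_le ?_
  rintro _ ⟨i, rfl⟩
  fin_cases i
  exacts [hθ ⟨_, rfl⟩, hθ ⟨_, rfl⟩, hg]

theorem FreeGroup.range_le_range_adjoin (θ : FreeGroup (Fin 2) →* G) (g : G) :
    θ.range ≤ (FreeGroup.adjoin θ g).range := by
  have : θ = (FreeGroup.adjoin θ g).comp (FreeGroup.map (Fin.castLE (by norm_num))) := by
    ext i; fin_cases i <;> simp [FreeGroup.adjoin]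
  rintro _ ⟨x, rfl⟩
  exact ⟨_, (DFunLike.congr_fun this x).symm⟩

theorem FreeGroup.mem_range_adjoin (θ : FreeGroup (Fin 2) →* G) (g : G) :
    g ∈ (FreeGroup.adjoin θ g).range :=
  ⟨.of 2, by simp [FreeGroup.adjoin]⟩

theorem Depends.not_injective_adjoin {θ : FreeGroup (Fin 2) →* G} {g : G}
    (h : Depends θ.range g) : ¬ Function.Injective (FreeGroup.adjoin θ g) := by
  contrapose! h
  rw [Depends, not_not]
  let π : FreeGroup (Fin 3) →* Monoid.Coprod θ.range (FreeGroup Unit) :=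
    FreeGroup.adjoin (Monoid.Coprod.inl.comp θ.rangeRestrict) (Monoid.Coprod.inr (.of ()))
  have hcomp : (phi θ.range g).comp π = FreeGroup.adjoin θ g := by
    ext i; fin_cases i <;> simp [π, FreeGroup.adjoin, phi]
  have hπ : Function.Surjective π := by
    rw [← MonoidHom.range_eq_top, eq_top_iff, ← Monoid.Coprod.range_inl_sup_range_inr]
    refine sup_le ?_ ?_
    · refine le_trans ?_ (FreeGroup.range_le_range_adjoin _ _)
      rw [MonoidHom.range_comp, MonoidHom.range_eq_top.2 θ.rangeRestrict_surjective,
        ← MonoidHom.range_eq_map]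
    · rw [MonoidHom.range_eq_map (Monoid.Coprod.inr : FreeGroup Unit →* θ.range ∗ FreeGroup Unit),
        ← FreeGroup.closure_range_of, MonoidHom.map_closure,
        Subgroup.closure_le]
      rintro _ ⟨_, ⟨x, rfl⟩, rfl⟩
      exact FreeGroup.mem_range_adjoin _ _
  rw [← hcomp, MonoidHom.coe_comp] at h
  exact Function.Injective.of_comp_right h hπ

end Dependence

section Endomorphism

variable {α : Type*} [DecidableEq α]

/-- The endomorphism `a ↦ a⁻¹ b a b⁻¹`, `b ↦ a` of a free group fixing the generators other
than `a` and `b`. -/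
def commEnd (a b : α) : FreeGroup α →* FreeGroup α :=
  FreeGroup.lift fun x =>
    if x = a then (.of a)⁻¹ * .of b * .of a * (.of b)⁻¹ else if x = b then .of a else .of x

/-- The homomorphism to a wreath product with `ℤ` that records the exponent sum of `b` and, on the
conjugates of the generators by powers of `b`, a left inverse of `commEnd a b`. -/
noncomputable def wreathHom (a b : α) :
    FreeGroup α →* RegularWreathProduct (FreeGroup α) (Multiplicative ℤ) :=
  FreeGroup.lift fun x =>
    if x = b then RegularWreathProduct.inl (.ofAdd 1)
    else if x = a then ⟨fun k => if k = 1 then .of b else .of b * .of a, 1⟩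
    else ⟨fun _ => .of x, 1⟩

/-- Evaluation at `1` on the base group of a wreath product. -/
def RegularWreathProduct.baseEval (D Q : Type*) [Group D] [Group Q] :
    (RegularWreathProduct.rightHom : RegularWreathProduct D Q →* Q).ker →* D where
  toFun x := x.1.left 1
  map_one' := rfl
  map_mul' x y := by
    have hx : x.1.right = 1 := x.2
    simp [hx]

/-- The exponent sum of the generator `b`. -/
noncomputable def expSum (a b : α) : FreeGroup α →* Multiplicative ℤ :=
  RegularWreathProduct.rightHom.comp (wreathHom a b)

theorem expSum_of_left {a b : α} (hab : a ≠ b) : expSum a b (.of a) = 1 := by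
  simp [expSum, wreathHom, hab]

theorem expSum_of_right (a b : α) : expSum a b (.of b) = .ofAdd 1 := by
  simp [expSum, wreathHom]

theorem range_commEnd_le {a b : α} (hab : a ≠ b) : (commEnd a b).range ≤ (expSum a b).ker := by
  refine FreeGroup.range_lift_le ?_
  rintro _ ⟨x, rfl⟩
  by_cases hxa : x = a
  · simp [hxa, MonoidHom.mem_ker, expSum_of_left hab]
  · by_cases hxb : x = b
    · simp [hxb, hab.symm, MonoidHom.mem_ker, expSum_of_left hab]
    · simp [hxa, hxb, MonoidHom.mem_ker, expSum, wreathHom]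

/-- A homomorphism on the kernel of `expSum a b` that is left inverse to `commEnd a b`. -/
noncomputable def kerHom (a b : α) : (expSum a b).ker →* FreeGroup α :=
  (RegularWreathProduct.baseEval _ _).comp
    (((wreathHom a b).comp (expSum a b).ker.subtype).codRestrict _ fun x => x.2)

theorem kerHom_commEnd {a b : α} (hab : a ≠ b) (w : FreeGroup α)
    (hw : commEnd a b w ∈ (expSum a b).ker) : kerHom a b ⟨commEnd a b w, hw⟩ = w := by
  have h : (kerHom a b).comp ((commEnd a b).codRestrict _
      fun x => range_commEnd_le hab ⟨x, rfl⟩) = MonoidHom.id _ := by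
    ext x
    by_cases hxa : x = a
    · subst hxa
      simp [kerHom, RegularWreathProduct.baseEval, commEnd, wreathHom, hab]
    · by_cases hxb : x = b
      · subst hxb
        simp [kerHom, RegularWreathProduct.baseEval, commEnd, wreathHom, hab, hab.symm]
      · simp [kerHom, RegularWreathProduct.baseEval, commEnd, wreathHom, hxa, hxb]
  exact DFunLike.congr_fun h w

theorem commEnd_injective {a b : α} (hab : a ≠ b) : Function.Injective (commEnd a b) := by
  intro x y hxy
  rw [← kerHom_commEnd hab x (range_commEnd_le hab ⟨x, rfl⟩),
    ← kerHom_commEnd hab y (range_commEnd_le hab ⟨y, rfl⟩)]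
  simp only [hxy]

end Endomorphism

section RankTwo

theorem FreeGroup.adjoin_comp_commEnd {G : Type*} [Group G] (θ : FreeGroup (Fin 2) →* G) (g : G) :
    FreeGroup.adjoin (θ.comp (commEnd 0 1)) g = (FreeGroup.adjoin θ g).comp (commEnd 0 1) := by
  ext i
  fin_cases i <;> simp [FreeGroup.adjoin, commEnd]

/-- The iterates of the endomorphism `commEnd 0 1` of the free group of rank `2`. -/
def commPow : ℕ → FreeGroup (Fin 2) →* FreeGroup (Fin 2)
  | 0 => MonoidHom.id _
  | k + 1 => (commEnd 0 1).comp (commPow k)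

theorem commPow_succ' (k : ℕ) : commPow (k + 1) = (commEnd 0 1).comp (commPow k) := rfl

theorem commPow_succ (k : ℕ) : commPow (k + 1) = (commPow k).comp (commEnd 0 1) := by
  induction k with
  | zero => rfl
  | succ k ih => rw [commPow_succ', commPow_succ' k, MonoidHom.comp_assoc, ← ih, commPow_succ']

theorem FreeGroup.not_injective_adjoin_of_comp {G : Type*} [Group G]
    (θ : FreeGroup (Fin 2) →* G) (g : G) (k : ℕ)
    (h : ¬ Function.Injective (FreeGroup.adjoin (θ.comp (commPow k)) g)) :
    ¬ Function.Injective (FreeGroup.adjoin θ g) := by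
  induction k with
  | zero => exact h
  | succ k ih =>
    refine ih fun hinj => h ?_
    rw [commPow_succ, ← MonoidHom.comp_assoc, FreeGroup.adjoin_comp_commEnd]
    exact hinj.comp (commEnd_injective (by decide))

/-- The range of `commEnd 0 1` is closed under dependence within the kernel of the exponent sum. -/
theorem mem_range_commEnd_of_expSum_eq_one {g : FreeGroup (Fin 2)}
    (hg : expSum (0 : Fin 2) 1 g = 1)
    (h : ¬ Function.Injective (FreeGroup.adjoin (commEnd 0 1) g)) :
    g ∈ (commEnd (0 : Fin 2) 1).range := by
  have h01 : (0 : Fin 2) ≠ 1 := by decide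
  obtain ⟨θ, hθ⟩ := FreeGroup.exists_range_eq_of_not_injective h
  have hker : θ.range ≤ (expSum (0 : Fin 2) 1).ker := by
    rw [hθ]; exact FreeGroup.range_adjoin_le (range_commEnd_le h01) hg
  let τ : FreeGroup (Fin 2) →* FreeGroup (Fin 2) :=
    (kerHom 0 1).comp (θ.codRestrict _ fun x => hker ⟨x, rfl⟩)
  have hlift : ∀ w, ∃ z, θ z = commEnd 0 1 w ∧ τ z = w := by
    intro w
    have : commEnd 0 1 w ∈ θ.range := by
      rw [hθ]; exact FreeGroup.range_le_range_adjoin _ _ ⟨w, rfl⟩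
    obtain ⟨z, hz⟩ := this
    refine ⟨z, hz, ?_⟩
    rw [← kerHom_commEnd h01 w (range_commEnd_le h01 ⟨w, rfl⟩)]
    simp only [← hz]
    rfl
  have hinj : Function.Injective τ :=
    FreeGroup.injective_of_surjective fun w => (hlift w).imp fun _ h => h.2
  obtain ⟨y, rfl⟩ : g ∈ θ.range := by rw [hθ]; exact FreeGroup.mem_range_adjoin _ _
  obtain ⟨z, hz, hz'⟩ := hlift (τ y)
  exact ⟨τ y, by rw [← hz, hinj hz']⟩

/-- The image of a free group of rank `2` in an abelian group has rank at most `2`. -/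
theorem not_linearIndependent_of_freeGroup {A : Type*} [AddCommGroup A]
    (f : FreeGroup (Fin 2) →* Multiplicative A) (z : Fin 3 → FreeGroup (Fin 2)) :
    ¬ LinearIndependent ℤ fun i => (f (z i)).toAdd := by
  intro h
  classical
  have hS : ∀ w, (f w).toAdd ∈ Submodule.span ℤ (Set.range fun i => (f (.of i)).toAdd) := by
    intro w
    induction w using FreeGroup.induction_on with
    | C1 => simp
    | of i => exact Submodule.subset_span ⟨i, rfl⟩
    | inv_of i hi => simpa using hi
    | mul x y hx hy => simpa using Submodule.add_mem _ hx hy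
  have h3 := linearIndependent_le_span_aux' _ h (Set.range fun i => (f (.of i)).toAdd)
    (by rintro _ ⟨i, rfl⟩; exact hS _)
  have h2 := Fintype.card_range_le fun i : Fin 2 => (f (.of i)).toAdd
  simp only [Fintype.card_fin] at h2 h3
  omega

/-- The action of the multiplicative group of the real numbers on the additive group. -/
def scaleHom : ℝˣ →* MulAut (Multiplicative ℝ) where
  toFun u := AddEquiv.toMultiplicative (DistribMulAction.toAddEquiv ℝ u)
  map_one' := by ext; simp
  map_mul' u v := by ext; simp [mul_smul]

theorem toAdd_scaleHom (u : ℝˣ) (x : Multiplicative ℝ) :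
    (scaleHom u x).toAdd = u * x.toAdd := rfl

theorem toAdd_scaleHom_symm (u : ℝˣ) (x : Multiplicative ℝ) :
    ((scaleHom u).symm x).toAdd = (u : ℝ)⁻¹ * x.toAdd := by
  rw [← Units.val_inv_eq_inv_val]; rfl

/-- The group of affine transformations of the real line. -/
abbrev RealAffine : Type := Multiplicative ℝ ⋊[scaleHom] ℝˣ

/-- The homomorphism from the translations of the real line to the real numbers. -/
def translationHom : (SemidirectProduct.rightHom : RealAffine →* ℝˣ).ker →* Multiplicative ℝ where
  toFun x := x.1.left
  map_one' := rfl
  map_mul' x y := by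
    have hx : x.1.right = 1 := x.2
    simp [hx]

/-- The affine representation `a ↦ (z ↦ X z)`, `b ↦ (z ↦ Y z + 1)`. -/
noncomputable def affineHom (X Y : ℝˣ) : FreeGroup (Fin 2) →* RealAffine :=
  FreeGroup.lift ![⟨1, X⟩, ⟨.ofAdd 1, Y⟩]

theorem right_affineHom (X Y : ℝˣ) (g : FreeGroup (Fin 2)) :
    (affineHom X Y g).right =
      X ^ (expSum (1 : Fin 2) 0 g).toAdd * Y ^ (expSum (0 : Fin 2) 1 g).toAdd := by
  have h : SemidirectProduct.rightHom.comp (affineHom X Y) =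
      ((zpowersHom ℝˣ X).comp (expSum (1 : Fin 2) 0)) *
        ((zpowersHom ℝˣ Y).comp (expSum (0 : Fin 2) 1)) := by
    ext i
    fin_cases i <;> simp [affineHom, expSum_of_right, expSum_of_left]
  simpa [zpowersHom_apply] using DFunLike.congr_fun h g

theorem exists_units_right_affineHom_eq_one {g : FreeGroup (Fin 2)}
    (hg : expSum (0 : Fin 2) 1 g ≠ 1) :
    ∃ X Y : ℝˣ, Irrational X ∧ (affineHom X Y g).right = 1 := by
  have h2 : (0 : ℝ) < √2 := by positivity
  set j := (expSum (1 : Fin 2) 0 g).toAdd with hj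
  set k := (expSum (0 : Fin 2) 1 g).toAdd with hk
  have hk0 : (k : ℝ) ≠ 0 := by
    exact_mod_cast fun h => hg (Multiplicative.toAdd.injective h)
  refine ⟨Units.mk0 √2 h2.ne', Units.mk0 (√2 ^ (-(j : ℝ) / k)) (by positivity),
    irrational_sqrt_two, ?_⟩
  rw [right_affineHom, ← hj, ← hk]
  ext
  push_cast [Units.val_mk0]
  rw [← Real.rpow_intCast (√2 ^ _), ← Real.rpow_mul h2.le, ← Real.rpow_intCast,
    ← Real.rpow_add h2, div_mul_cancel₀ _ hk0, add_neg_cancel, Real.rpow_zero]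

theorem expSum_eq_one_of_not_injective {g : FreeGroup (Fin 2)}
    (h : ¬ Function.Injective (FreeGroup.adjoin ((commEnd 0 1).comp (commEnd 0 1)) g)) :
    expSum (0 : Fin 2) 1 g = 1 := by
  by_contra hg
  obtain ⟨X, Y, hX, hXY⟩ := exists_units_right_affineHom_eq_one hg
  obtain ⟨θ, hθ⟩ := FreeGroup.exists_range_eq_of_not_injective h
  let ρ := affineHom X Y
  let ψ : FreeGroup (Fin 2) →* FreeGroup (Fin 2) := (commEnd 0 1).comp (commEnd 0 1)
  have hψ₀ : (ρ (ψ (.of 0))).right = 1 := by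
    simp [ρ, ψ, commEnd, affineHom]
  have hψ₁ : (ρ (ψ (.of 1))).right = 1 := by
    simp [ρ, ψ, commEnd, affineHom]
  have hker : (ρ.comp θ).range ≤ (SemidirectProduct.rightHom : RealAffine →* ℝˣ).ker := by
    rw [MonoidHom.range_comp, hθ, Subgroup.map_le_iff_le_comap]
    refine FreeGroup.range_lift_le ?_
    rintro _ ⟨i, rfl⟩
    fin_cases i
    exacts [hψ₀, hψ₁, hXY]
  let f : FreeGroup (Fin 2) →* Multiplicative (ℝ × ℤ) :=
    (MulEquiv.prodMultiplicative ℝ ℤ).symm.toMonoidHom.comp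
      ((translationHom.comp ((ρ.comp θ).codRestrict _ fun x => hker ⟨x, rfl⟩)).prod
        ((expSum 0 1).comp θ))
  have hf : ∀ w, (f w).toAdd = ((ρ (θ w)).left.toAdd, (expSum 0 1 (θ w)).toAdd) := fun w => rfl
  have hmem : ∀ w, FreeGroup.adjoin ψ g w ∈ θ.range := fun w => hθ ▸ ⟨w, rfl⟩
  choose z hz using fun i : Fin 3 => hmem (.of i)
  refine not_linearIndependent_of_freeGroup f z (Fintype.linearIndependent_iff.2 fun t ht => ?_)
  have hX0 : (X : ℝ) ≠ 0 := X.ne_zero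
  have h0 : (f (z 0)).toAdd = (((X : ℝ) - 1) * ((X : ℝ)⁻¹ - 1), 0) := by
    rw [hf, hz]
    simp [FreeGroup.adjoin, ψ, commEnd, ρ, affineHom, toAdd_scaleHom, toAdd_scaleHom_symm,
      expSum_of_left]
    field_simp
    ring
  have h1 : (f (z 1)).toAdd = ((X : ℝ)⁻¹ - 1, 0) := by
    rw [hf, hz]
    simp [FreeGroup.adjoin, ψ, commEnd, ρ, affineHom, toAdd_scaleHom_symm, expSum_of_left]
    ring
  have h2 : (f (z 2)).toAdd = ((ρ g).left.toAdd, (expSum 0 1 g).toAdd) := by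
    rw [hf, hz]; simp [FreeGroup.adjoin]
  rw [Fin.sum_univ_three, h0, h1, h2] at ht
  have hk : (expSum (0 : Fin 2) 1 g).toAdd ≠ 0 := fun h => hg (Multiplicative.toAdd.injective h)
  have ht2 : t 2 = 0 := by
    have := congrArg Prod.snd ht
    simpa [hk] using this
  have hX1 : (X : ℝ) ≠ 1 := hX.ne_one
  have hδ : (X : ℝ)⁻¹ - 1 ≠ 0 := by
    rw [sub_ne_zero]; simpa using hX1
  have ht01 : (t 0 : ℝ) * (X - 1) + t 1 = 0 := by
    have := congrArg Prod.fst ht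
    simp [ht2] at this
    apply mul_right_cancel₀ hδ
    linarith
  have ht0 : t 0 = 0 := by
    by_contra hne
    have hne' : (t 0 : ℝ) ≠ 0 := by exact_mod_cast hne
    refine hX ⟨1 - t 1 / t 0, ?_⟩
    push_cast
    field_simp
    linarith
  have ht1 : t 1 = 0 := by simpa [ht0] using ht01
  intro i
  fin_cases i
  exacts [ht0, ht1, ht2]

theorem depSet_range_pow_subset (k : ℕ) :
    depSet (MonoidHom.range (commPow (k + 2))) ⊆
      (commEnd (0 : Fin 2) 1).range := by
  intro g hg
  have h := Depends.not_injective_adjoin hg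
  have h2 : ¬ Function.Injective
      (FreeGroup.adjoin ((commEnd 0 1).comp (commEnd (0 : Fin 2) 1)) g) := by
    apply FreeGroup.not_injective_adjoin_of_comp _ _ k
    rw [commPow_succ', commPow_succ'] at h
    exact h
  exact mem_range_commEnd_of_expSum_eq_one (expSum_eq_one_of_not_injective h2)
    (FreeGroup.not_injective_adjoin_of_comp _ _ 1 h2)

theorem DepSubgroup_range_commEnd : DepSubgroup (commEnd (0 : Fin 2) 1).range = ⊤ := by
  set K := (commEnd (0 : Fin 2) 1).range
  have ha : FreeGroup.of 0 ∈ K := ⟨.of 1, by simp [commEnd]⟩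
  have hc : (FreeGroup.of 0)⁻¹ * .of 1 * .of 0 * (.of 1)⁻¹ ∈ K := ⟨.of 0, by simp [commEnd]⟩
  have hb : Depends K (.of 1) := by
    intro hinj
    have := @hinj (Monoid.Coprod.inl ⟨_, hc⟩)
      ((Monoid.Coprod.inl ⟨_, ha⟩)⁻¹ * Monoid.Coprod.inr (.of ()) * Monoid.Coprod.inl ⟨_, ha⟩ *
        (Monoid.Coprod.inr (.of ()))⁻¹) (by simp [phi])
    have := congrArg (Monoid.Coprod.fst (M := K) (N := FreeGroup Unit)) this
    simp at this
    exact absurd this (by decide)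
  rw [eq_top_iff, ← FreeGroup.closure_range_of, Subgroup.closure_le]
  rintro _ ⟨i, rfl⟩
  fin_cases i
  · exact K.le_DepSubgroup ha
  · exact Subgroup.subset_closure hb

theorem DepSubgroup_range_pow (k : ℕ) :
    DepSubgroup (MonoidHom.range (commPow (k + 1))) =
      MonoidHom.range (commPow k) := by
  have hmap : ∀ n : ℕ, MonoidHom.range (commPow (n + 1)) =
      (MonoidHom.range (commPow n)).map (commEnd 0 1) := by
    intro n
    rw [commPow_succ', MonoidHom.range_comp]
  induction k with
  | zero =>
    exact DepSubgroup_range_commEnd.trans (MonoidHom.range_eq_top.2 Function.surjective_id).symm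
  | succ k ih =>
    have h := depSet_range_pow_subset k
    rw [hmap (k + 1)] at h
    rw [hmap (k + 1), DepSubgroup_map (commEnd_injective (by decide)) _ h, ih, ← hmap]

end RankTwo

/-- in the free group of rank 2, for every `m ≥ 0` there is a finitely
generated subgroup `H` whose dependence length is exactly `m`: `m` is the minimal `k`
with `DepCl H = Dep^k H`. -/
theorem exists_subgroup_dependence_length (m : ℕ) :
    ∃ H : Subgroup (FreeGroup (Fin 2)), H.FG ∧
      (⨆ i, DepSubgroup^[i] H) = DepSubgroup^[m] H ∧
      ∀ k < m, (⨆ i, DepSubgroup^[i] H) ≠ DepSubgroup^[k] H := by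
  let R : ℕ → Subgroup (FreeGroup (Fin 2)) := fun n =>
    MonoidHom.range (commPow n)
  have hiter : ∀ k n, DepSubgroup^[k] (R (n + k)) = R n := by
    intro k
    induction k with
    | zero => intro n; rfl
    | succ k ih =>
      intro n
      rw [Function.iterate_succ_apply, ← add_assoc, DepSubgroup_range_pow]
      exact ih n
  have hzero : R 0 = ⊤ := MonoidHom.range_eq_top.2 Function.surjective_id
  have hm : DepSubgroup^[m] (R m) = ⊤ := by simpa [hzero] using hiter m 0
  have hsup : (⨆ i, DepSubgroup^[i] (R m)) = ⊤ :=
    eq_top_iff.2 (hm ▸ le_iSup (fun i => DepSubgroup^[i] (R m)) m)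
  refine ⟨R m, ?_, by rw [hsup, hm], fun k hk => ?_⟩
  · exact (Group.fg_iff_subgroup_fg _).1 (Group.fg_range (commPow m))
  · obtain ⟨j, rfl⟩ := Nat.exists_eq_add_of_lt hk
    have hle : R (j + 1) ≤ (expSum (0 : Fin 2) 1).ker := by
      refine le_trans ?_ (range_commEnd_le (by decide))
      simp only [R, commPow_succ']
      rintro _ ⟨x, rfl⟩
      exact ⟨_, rfl⟩
    rw [hsup, show k + j + 1 = (j + 1) + k by ring, hiter]
    intro h
    have : FreeGroup.of 1 ∈ (expSum (0 : Fin 2) 1).ker := hle (h ▸ Subgroup.mem_top _)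
    rw [MonoidHom.mem_ker, expSum_of_right] at this
    exact absurd this (by decide)
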